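/- For all integers d, k with 1 < k < d and all n, m ≥ 1, the numbers of (d,k)-fixed polyominoids satisfy the pseudo-superadditivity c^XD_{(d,k),n} · c^XD_{(d,k),m} ≤ c^XD_{(d,k), n+m+2(k²+3k−1)}. -/

import Mathlib

open Filter

/-- A `k`-face of the hypercubic lattice `ℤ^d`: an orientation set `S ⊆ {1,…,d}`
together with a base vertex `v ∈ ℤ^d`. -/
abbrev Face (d : ℕ) := Finset (Fin d) × (Fin d → ℤ)

/-- The boundary `(k-1)`-edges of a `k`-face `(S, v)`: the `(k-1)`-faces
`(S \ {i}, v)` and `(S \ {i}, v + e_i)` for `i ∈ S`. -/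
def faceEdges {d : ℕ} (f : Face d) : Finset (Face d) :=
  f.1.biUnion fun i =>
    {(f.1.erase i, f.2), (f.1.erase i, f.2 + Pi.single i 1)}

/-- Two faces are adjacent if they are distinct and share a common boundary edge. -/
def FaceAdj {d : ℕ} (f g : Face d) : Prop :=
  f ≠ g ∧ ∃ e, e ∈ faceEdges f ∧ e ∈ faceEdges g

/-- A set of faces is connected with respect to adjacency. -/
def ConnectedFaces {d : ℕ} (M : Finset (Face d)) : Prop :=
  ∀ f ∈ M, ∀ g ∈ M, Relation.ReflTransGen (fun a b => a ∈ M ∧ b ∈ M ∧ FaceAdj a b) f g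

/-- A `(d,k)`-self-avoiding manifold of `k`-area `n`: a connected set of `n` `k`-faces
such that every `(k-1)`-edge bounds at most two of its `k`-faces. -/
def IsSAM (d k n : ℕ) (M : Finset (Face d)) : Prop :=
  M.card = n ∧ (∀ f ∈ M, f.1.card = k) ∧ ConnectedFaces M ∧
    ∀ e : Face d, (M.filter fun f => e ∈ faceEdges f).card ≤ 2

/-- A closed `(d,k)`-self-avoiding manifold: every boundary edge of every face
is shared by exactly two faces. -/
def IsClosedSAM (d k n : ℕ) (M : Finset (Face d)) : Prop :=
  IsSAM d k n M ∧ ∀ f ∈ M, ∀ e ∈ faceEdges f,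
    (M.filter fun g => e ∈ faceEdges g).card = 2

/-- A `(d,k)`-fixed polyominoid of `k`-area `n`: a connected set of `n` `k`-faces. -/
def IsXD (d k n : ℕ) (M : Finset (Face d)) : Prop :=
  M.card = n ∧ (∀ f ∈ M, f.1.card = k) ∧ ConnectedFaces M

/-- Translation of a face by a lattice vector. -/
def translateFace {d : ℕ} (t : Fin d → ℤ) (f : Face d) : Face d := (f.1, f.2 + t)

/-- Two sets of faces are translation-equivalent. -/
def TransEquiv {d : ℕ} (A B : Finset (Face d)) : Prop :=
  ∃ t : Fin d → ℤ, A.image (translateFace t) = B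

/-- The number of `(d,k)`-self-avoiding manifolds of `k`-area `n`, up to translation. -/
noncomputable def samCount (d k n : ℕ) : ℕ :=
  Nat.card (Quot fun A B : {M : Finset (Face d) // IsSAM d k n M} =>
    TransEquiv A.val B.val)

/-- The number of closed `(d,k)`-self-avoiding manifolds of `k`-area `n`, up to
translation. -/
noncomputable def closedSamCount (d k n : ℕ) : ℕ :=
  Nat.card (Quot fun A B : {M : Finset (Face d) // IsClosedSAM d k n M} =>
    TransEquiv A.val B.val)

/-- The number of `(d,k)`-fixed polyominoids of `k`-area `n`, up to translation. -/
noncomputable def xdCount (d k n : ℕ) : ℕ :=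
  Nat.card (Quot fun A B : {M : Finset (Face d) // IsXD d k n M} =>
    TransEquiv A.val B.val)

/-!
Compare faces by the lexicographic order of their base vertices, which translations preserve. Given
polyominoids `A` and `B`, take a highest face `f` of `A` and a lowest face `g` of `B`. Starting
from `f`, attach faces one at a time, each adjacent to the previous one and strictly higher; each
attachment can trade one direction of the current face for a missing direction of `g`, so after
`min k (d - k)` of them the current face is parallel to `g`, and `B` can be translated so that
`g` lands on it. In the union, `A` is an initial and the translate of `B` a final segment, so both
are recovered, up to translation, from the union and the two areas: joining is injective on
translation classes.
-/

section InitialSegment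

variable {α : Type*} {r : α → α → Prop} {A A' B M N : Finset α}

/-- `A` is an initial segment of `M` for the strict order `r`: each element of `A` is below each
element of `M` outside `A`. Final segments are initial segments for `Function.swap r`. -/
def IsInitialSegment (r : α → α → Prop) (A M : Finset α) : Prop :=
  A ⊆ M ∧ ∀ a ∈ A, ∀ x ∈ M, x ∉ A → r a x

namespace IsInitialSegment

lemma refl (r : α → α → Prop) (M : Finset α) : IsInitialSegment r M M :=
  ⟨Finset.Subset.rfl, fun _ _ _ hx hx' => absurd hx hx'⟩

lemma trans (hAM : IsInitialSegment r A M) (hMN : IsInitialSegment r M N) :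
    IsInitialSegment r A N := by
  refine ⟨hAM.1.trans hMN.1, fun a ha x hxN hxA => ?_⟩
  by_cases hxM : x ∈ M
  · exact hAM.2 a ha x hxM hxA
  · exact hMN.2 a (hAM.1 ha) x hxN hxM

lemma union_left [DecidableEq α] (h : ∀ a ∈ A, ∀ b ∈ B, r a b) :
    IsInitialSegment r A (A ∪ B) :=
  ⟨Finset.subset_union_left, fun a ha x hx hxA =>
    h a ha x ((Finset.mem_union.1 hx).resolve_left hxA)⟩

lemma union_right [DecidableEq α] (h : ∀ a ∈ A, ∀ b ∈ B, r a b) :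
    IsInitialSegment (Function.swap r) B (A ∪ B) :=
  Finset.union_comm B A ▸ union_left fun b hb a ha => h a ha b hb

lemma eq_of_card_eq [Std.Asymm r] (hA : IsInitialSegment r A M) (hA' : IsInitialSegment r A' M)
    (hcard : A.card = A'.card) : A = A' := by
  by_cases hAA' : A ⊆ A'
  · exact Finset.eq_of_subset_of_card_le hAA' hcard.ge
  by_cases hA'A : A' ⊆ A
  · exact (Finset.eq_of_subset_of_card_le hA'A hcard.le).symm
  obtain ⟨x, hxA, hxA'⟩ := Finset.not_subset.1 hAA'
  obtain ⟨y, hyA', hyA⟩ := Finset.not_subset.1 hA'A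
  exact absurd (hA'.2 y hyA' x (hA.1 hxA) hxA') (asymm (hA.2 x hxA y (hA'.1 hyA') hyA))

lemma image [DecidableEq α] {φ : α → α} (hφ : ∀ {a b}, r a b → r (φ a) (φ b))
    (hA : IsInitialSegment r A M) : IsInitialSegment r (A.image φ) (M.image φ) := by
  refine ⟨Finset.image_subset_image hA.1, fun a ha x hx hxA => ?_⟩
  obtain ⟨a', ha', rfl⟩ := Finset.mem_image.1 ha
  obtain ⟨x', hx', rfl⟩ := Finset.mem_image.1 hx
  exact hφ (hA.2 a' ha' x' hx' fun h => hxA (Finset.mem_image_of_mem φ h))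

end IsInitialSegment

end InitialSegment

section Exchange

variable {α : Type*} [DecidableEq α] {S T : Finset α}

-- The subtraction is truncated: once `S = T`, the choice `i = j` keeps it so.
lemma exists_exchange (hS : S.Nonempty) (hcard : S.card = T.card) :
    ∃ i ∈ S, ∃ j ∈ T, j ∉ S.erase i ∧ ((S \ T).erase i).card = (S \ T).card - 1 := by
  rcases (S \ T).eq_empty_or_nonempty with hST | ⟨i, hi⟩
  · obtain rfl : S = T :=
      Finset.eq_of_subset_of_card_le (Finset.sdiff_eq_empty_iff_subset.1 hST) hcard.ge
    obtain ⟨i, hi⟩ := hS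
    exact ⟨i, hi, i, hi, Finset.notMem_erase i S, by simp⟩
  · have hTS : (T \ S).Nonempty := by
      rw [← Finset.card_pos, ← Finset.card_sdiff_comm hcard]
      exact Finset.card_pos.2 ⟨i, hi⟩
    obtain ⟨j, hj⟩ := hTS
    obtain ⟨hjT, hjS⟩ := Finset.mem_sdiff.1 hj
    exact ⟨i, (Finset.mem_sdiff.1 hi).1, j, hjT, fun h => hjS (Finset.mem_of_mem_erase h),
      Finset.card_erase_of_mem hi⟩

lemma insert_erase_sdiff_subset {i j : α} (hj : j ∈ T) :
    insert j (S.erase i) \ T ⊆ (S \ T).erase i := by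
  rw [Finset.insert_sdiff_of_mem _ hj, Finset.erase_sdiff_comm]

lemma card_sdiff_le_min [Fintype α] (S T : Finset α) :
    (S \ T).card ≤ min S.card (Fintype.card α - T.card) := by
  refine le_min (Finset.card_le_card Finset.sdiff_subset) ?_
  rw [← Finset.card_compl]
  exact Finset.card_le_card fun x hx => Finset.mem_compl.2 (Finset.mem_sdiff.1 hx).2

end Exchange

variable {d k n m : ℕ} {f g e : Face d} {A B A' B' M M' N : Finset (Face d)}

section Translation

lemma translateFace_zero : (translateFace 0 : Face d → Face d) = id := by
  funext f
  simp [translateFace]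

lemma translateFace_comp (s t : Fin d → ℤ) :
    (translateFace s : Face d → Face d) ∘ translateFace t = translateFace (t + s) := by
  funext f
  simp [translateFace, add_assoc]

lemma translateFace_injective (t : Fin d → ℤ) :
    Function.Injective (translateFace t : Face d → Face d) := by
  intro f g h
  simp only [translateFace, Prod.mk.injEq, add_left_inj] at h
  exact Prod.ext h.1 h.2

lemma transEquiv_equivalence : Equivalence (TransEquiv (d := d)) where
  refl M := ⟨0, by rw [translateFace_zero, Finset.image_id]⟩
  symm := by
    rintro A B ⟨t, rfl⟩
    exact ⟨-t, by rw [Finset.image_image, translateFace_comp, add_neg_cancel, translateFace_zero,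
      Finset.image_id]⟩
  trans := by
    rintro A B C ⟨t, rfl⟩ ⟨s, rfl⟩
    exact ⟨t + s, by rw [Finset.image_image, translateFace_comp]⟩

lemma TransEquiv.card_eq (h : TransEquiv A B) : A.card = B.card := by
  obtain ⟨t, rfl⟩ := h
  exact (Finset.card_image_of_injective A (translateFace_injective t)).symm

lemma TransEquiv.of_isInitialSegment {r : Face d → Face d → Prop} [Std.Asymm r]
    (hr : ∀ t {f g}, r f g → r (translateFace t f) (translateFace t g)) (hM : TransEquiv M M')
    (hA : IsInitialSegment r A M) (hA' : IsInitialSegment r A' M') (hcard : A.card = A'.card) :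
    TransEquiv A A' := by
  obtain ⟨t, rfl⟩ := hM
  have hcard' : (A.image (translateFace t)).card = A'.card := by
    rw [Finset.card_image_of_injective A (translateFace_injective t), hcard]
  exact ⟨t, (hA.image (hr t)).eq_of_card_eq hA' hcard'⟩

end Translation

section Adjacency

lemma mem_faceEdges : e ∈ faceEdges f ↔
    ∃ i ∈ f.1, e = (f.1.erase i, f.2) ∨ e = (f.1.erase i, f.2 + Pi.single i 1) := by
  simp [faceEdges]

lemma translateFace_mem_faceEdges (t : Fin d → ℤ) (h : e ∈ faceEdges f) :
    translateFace t e ∈ faceEdges (translateFace t f) := by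
  obtain ⟨i, hi, rfl | rfl⟩ := mem_faceEdges.1 h
  · exact mem_faceEdges.2 ⟨i, hi, Or.inl rfl⟩
  · exact mem_faceEdges.2 ⟨i, hi, Or.inr (Prod.ext rfl (add_right_comm _ _ _))⟩

lemma base_le_of_mem_faceEdges (h : e ∈ faceEdges f) : f.2 ≤ e.2 := by
  obtain ⟨i, -, rfl | rfl⟩ := mem_faceEdges.1 h
  · exact le_rfl
  · exact le_add_of_nonneg_right (Pi.single_nonneg.2 zero_le_one)

lemma le_base_add_one_of_mem_faceEdges (h : e ∈ faceEdges f) : e.2 ≤ f.2 + 1 := by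
  obtain ⟨i, -, rfl | rfl⟩ := mem_faceEdges.1 h
  · exact le_add_of_nonneg_right zero_le_one
  · exact add_le_add_right (update_le_iff.2 ⟨le_rfl, fun _ _ => zero_le_one⟩) _

namespace FaceAdj

lemma symm (h : FaceAdj f g) : FaceAdj g f :=
  ⟨h.1.symm, h.2.imp fun _ he => he.symm⟩

lemma translateFace (t : Fin d → ℤ) (h : FaceAdj f g) :
    FaceAdj (translateFace t f) (translateFace t g) := by
  obtain ⟨hne, e, hef, heg⟩ := h
  exact ⟨(translateFace_injective t).ne hne, _, translateFace_mem_faceEdges t hef,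
    translateFace_mem_faceEdges t heg⟩

lemma base_le (h : FaceAdj f g) : f.2 ≤ g.2 + 1 := by
  obtain ⟨-, e, hef, heg⟩ := h
  exact (base_le_of_mem_faceEdges hef).trans (le_base_add_one_of_mem_faceEdges heg)

end FaceAdj

end Adjacency

section Connectedness

/-- Adjacency restricted to the faces of `M`; `ConnectedFaces M` says that its reflexive transitive
closure relates any two faces of `M`. -/
def AdjWithin (M : Finset (Face d)) (f g : Face d) : Prop :=
  f ∈ M ∧ g ∈ M ∧ FaceAdj f g

instance : Std.Symm (AdjWithin M) :=
  ⟨fun _ _ h => ⟨h.2.1, h.1, h.2.2.symm⟩⟩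

lemma AdjWithin.mono (h : M ⊆ N) : AdjWithin M ≤ AdjWithin N :=
  fun _ _ hfg => ⟨h hfg.1, h hfg.2.1, hfg.2.2⟩

lemma connectedFaces_of_root (h : ∀ g ∈ M, Relation.ReflTransGen (AdjWithin M) f g) :
    ConnectedFaces M :=
  fun x hx y hy => (symm (h x hx)).trans (h y hy)

namespace ConnectedFaces

lemma singleton (f : Face d) : ConnectedFaces {f} :=
  connectedFaces_of_root (f := f) fun g hg => by
    rw [Finset.mem_singleton.1 hg]

lemma union (hA : ConnectedFaces A) (hB : ConnectedFaces B) (hf : f ∈ A) (hg : g ∈ B)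
    (hfg : FaceAdj f g) : ConnectedFaces (A ∪ B) := by
  have hcross : AdjWithin (A ∪ B) f g :=
    ⟨Finset.mem_union_left B hf, Finset.mem_union_right A hg, hfg⟩
  refine connectedFaces_of_root (f := f) fun x hx => ?_
  rcases Finset.mem_union.1 hx with hxA | hxB
  · exact Relation.ReflTransGen.mono (AdjWithin.mono Finset.subset_union_left) _ _ (hA f hf x hxA)
  · exact .head hcross <|
      Relation.ReflTransGen.mono (AdjWithin.mono Finset.subset_union_right) _ _ (hB g hg x hxB)

lemma image_translateFace (hM : ConnectedFaces M) (t : Fin d → ℤ) :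
    ConnectedFaces (M.image (translateFace t)) := by
  intro f hf g hg
  obtain ⟨f', hf', rfl⟩ := Finset.mem_image.1 hf
  obtain ⟨g', hg', rfl⟩ := Finset.mem_image.1 hg
  refine Relation.ReflTransGen.lift (translateFace t) ?_ _ _ (hM f' hf' g' hg')
  exact fun a b ⟨ha, hb, hab⟩ =>
    ⟨Finset.mem_image_of_mem _ ha, Finset.mem_image_of_mem _ hb, hab.translateFace t⟩

lemma uIcc_subset_image (hM : ConnectedFaces M) (hf : f ∈ M) (hg : g ∈ M) (i : Fin d) :
    Finset.uIcc (f.2 i) (g.2 i) ⊆ M.image fun x => x.2 i := by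
  induction hM f hf g hg with
  | refl => simpa using ⟨_, _, hf, rfl⟩
  | @tail b c _ hbc ih =>
    obtain ⟨hb, hc, hadj⟩ := hbc
    have hbc : b.2 i ≤ c.2 i + 1 := hadj.base_le i
    have hcb : c.2 i ≤ b.2 i + 1 := hadj.symm.base_le i
    intro z hz
    by_cases hzc : z = c.2 i
    · exact Finset.mem_image.2 ⟨c, hc, hzc.symm⟩
    · refine ih hb ?_
      rw [Finset.mem_uIcc] at hz ⊢
      simp only [inf_le_iff, le_sup_iff] at hz ⊢
      omega

lemma abs_base_sub_le (hM : ConnectedFaces M) (hf : f ∈ M) (hg : g ∈ M) (i : Fin d) :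
    |g.2 i - f.2 i| ≤ M.card := by
  have hcard := (Finset.card_le_card (hM.uIcc_subset_image hf hg i)).trans Finset.card_image_le
  rw [Int.card_uIcc] at hcard
  rw [Int.abs_eq_natAbs]
  omega

end ConnectedFaces

end Connectedness

section Polyominoids

namespace IsXD

lemma singleton (f : Face d) : IsXD d f.1.card 1 {f} :=
  ⟨Finset.card_singleton f, fun g hg => by rw [Finset.mem_singleton.1 hg],
    ConnectedFaces.singleton f⟩

lemma union (hA : IsXD d k n A) (hB : IsXD d k m B) (hAB : Disjoint A B) (hf : f ∈ A) (hg : g ∈ B)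
    (hfg : FaceAdj f g) : IsXD d k (n + m) (A ∪ B) := by
  refine ⟨by rw [Finset.card_union_of_disjoint hAB, hA.1, hB.1], fun x hx => ?_,
    hA.2.2.union hB.2.2 hf hg hfg⟩
  exact (Finset.mem_union.1 hx).elim (hA.2.1 x) (hB.2.1 x)

lemma of_transEquiv (hM : IsXD d k n M) (h : TransEquiv M N) : IsXD d k n N := by
  refine ⟨h.card_eq ▸ hM.1, ?_, ?_⟩ <;> obtain ⟨t, rfl⟩ := h
  · intro f hf
    obtain ⟨f', hf', rfl⟩ := Finset.mem_image.1 hf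
    exact hM.2.1 f' hf'
  · exact hM.2.2.image_translateFace t

lemma exists_transEquiv_subset_box (hM : IsXD d k n M) :
    ∃ N, TransEquiv M N ∧ N ⊆ Finset.univ ×ˢ Finset.Icc (-(n : Fin d → ℤ)) n := by
  rcases M.eq_empty_or_nonempty with rfl | ⟨f, hf⟩
  · exact ⟨∅, transEquiv_equivalence.refl ∅, Finset.empty_subset _⟩
  refine ⟨M.image (translateFace (-f.2)), ⟨-f.2, rfl⟩, fun g hg => ?_⟩
  obtain ⟨g', hg', rfl⟩ := Finset.mem_image.1 hg
  have hspan (i : Fin d) : -(n : ℤ) ≤ g'.2 i - f.2 i ∧ g'.2 i - f.2 i ≤ n :=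
    abs_le.1 (hM.1 ▸ hM.2.2.abs_base_sub_le hf hg' i)
  simp only [Finset.mem_product, Finset.mem_univ, true_and, Finset.mem_Icc, translateFace,
    ← sub_eq_add_neg]
  exact ⟨fun i => (hspan i).1, fun i => (hspan i).2⟩

end IsXD

/-- The translation classes of `(d,k)`-fixed polyominoids of `k`-area `n`, which `xdCount`
counts. -/
abbrev XDClass (d k n : ℕ) : Type :=
  Quot fun A B : {M : Finset (Face d) // IsXD d k n M} => TransEquiv A.val B.val

lemma XDClass.mk_eq_mk_iff {A B : {M : Finset (Face d) // IsXD d k n M}} :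
    (Quot.mk _ A : XDClass d k n) = Quot.mk _ B ↔ TransEquiv A.val B.val :=
  (transEquiv_equivalence.comap Subtype.val).quot_mk_eq_iff A B

instance XDClass.instFinite : Finite (XDClass d k n) := by
  choose rep hrep hbox using fun M : {M : Finset (Face d) // IsXD d k n M} =>
    M.2.exists_transEquiv_subset_box
  let boxed (q : XDClass d k n) :
      (Finset.univ ×ˢ Finset.Icc (-(n : Fin d → ℤ)) n : Finset (Face d)).powerset :=
    ⟨rep q.out, Finset.mem_powerset.2 (hbox q.out)⟩
  refine Finite.of_injective boxed fun p q hpq => ?_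
  have hrep_eq : rep p.out = rep q.out := congrArg Subtype.val hpq
  rw [← p.out_eq, ← q.out_eq, mk_eq_mk_iff]
  exact transEquiv_equivalence.trans (hrep p.out)
    (hrep_eq ▸ transEquiv_equivalence.symm (hrep q.out))

end Polyominoids

section Height

/-- The strict order by height used to align polyominoids: faces are compared by the lexicographic
order of their base vertices, regardless of orientation. -/
def BaseLT (f g : Face d) : Prop := toLex f.2 < toLex g.2

instance : Std.Asymm (BaseLT (d := d)) :=
  ⟨fun _ _ => lt_asymm⟩

lemma BaseLT.translateFace (t : Fin d → ℤ) (h : BaseLT f g) :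
    BaseLT (translateFace t f) (translateFace t g) :=
  add_lt_add_left (α := Lex (Fin d → ℤ)) h (toLex t)

lemma disjoint_of_forall_baseLT (h : ∀ a ∈ A, ∀ b ∈ B, BaseLT a b) : Disjoint A B :=
  Finset.disjoint_left.2 fun x hxA hxB => lt_irrefl _ (h x hxA x hxB)

/-- The face spanned by the boundary edge `(S \ {i}, v + e_i)` of `f = (S, v)` and direction `j`,
used to climb from `f` while exchanging `i` for `j`. For `j = i` it is the translate of `f` by
`e_i`. -/
def pivot (f : Face d) (i j : Fin d) : Face d :=
  (insert j (f.1.erase i), f.2 + Pi.single i 1)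

variable {i j : Fin d}

lemma card_pivot (hi : i ∈ f.1) (hj : j ∉ f.1.erase i) : (pivot f i j).1.card = f.1.card := by
  rw [pivot, Finset.card_insert_of_notMem hj, Finset.card_erase_add_one hi]

lemma baseLT_pivot (f : Face d) (i j : Fin d) : BaseLT f (pivot f i j) :=
  Pi.toLex_strictMono (lt_add_of_pos_right f.2 (Pi.single_pos.2 zero_lt_one))

lemma faceAdj_pivot (hi : i ∈ f.1) (hj : j ∉ f.1.erase i) : FaceAdj f (pivot f i j) := by
  refine ⟨fun h => (baseLT_pivot f i j).ne (congrArg (fun g : Face d => toLex g.2) h),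
    (f.1.erase i, f.2 + Pi.single i 1), mem_faceEdges.2 ⟨i, hi, Or.inr rfl⟩,
    mem_faceEdges.2 ⟨j, Finset.mem_insert_self j _, Or.inl ?_⟩⟩
  rw [pivot, Finset.erase_insert hj]

lemma exists_higher_faceAdj {T : Finset (Fin d)} (hf : f.1.Nonempty) (hT : f.1.card = T.card) :
    ∃ g, FaceAdj f g ∧ BaseLT f g ∧ g.1.card = f.1.card ∧
      (g.1 \ T).card ≤ (f.1 \ T).card - 1 := by
  obtain ⟨i, hi, j, hjT, hj, hcard⟩ := exists_exchange hf hT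
  exact ⟨pivot f i j, faceAdj_pivot hi hj, baseLT_pivot f i j, card_pivot hi hj,
    hcard ▸ Finset.card_le_card (insert_erase_sdiff_subset hjT)⟩

end Height

section Joining

/-- `f` is a highest face of `M`, from which `M` is continued upwards; there may be several, with
the same base vertex. -/
def IsHighest (M : Finset (Face d)) (f : Face d) : Prop :=
  f ∈ M ∧ ∀ x ∈ M, toLex x.2 ≤ toLex f.2

/-- `f` is a lowest face of `M`, at which `M` is attached to a polyominoid below it; there may be
several, with the same base vertex. -/
def IsLowest (M : Finset (Face d)) (f : Face d) : Prop :=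
  f ∈ M ∧ ∀ x ∈ M, toLex f.2 ≤ toLex x.2

lemma exists_isHighest (hM : M.Nonempty) : ∃ f, IsHighest M f :=
  Finset.exists_max_image M (fun f => toLex f.2) hM

lemma exists_isLowest (hM : M.Nonempty) : ∃ f, IsLowest M f :=
  Finset.exists_min_image M (fun f => toLex f.2) hM

lemma isLowest_singleton (f : Face d) : IsLowest {f} f :=
  ⟨Finset.mem_singleton_self f, fun x hx => by rw [Finset.mem_singleton.1 hx]⟩

lemma IsHighest.forall_baseLT (hf : IsHighest A f) (hg : IsLowest B g) (hfg : BaseLT f g) :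
    ∀ a ∈ A, ∀ b ∈ B, BaseLT a b :=
  fun a ha b hb => (hf.2 a ha).trans_lt (hfg.trans_le (hg.2 b hb))

lemma IsHighest.union_singleton (hf : IsHighest M f) (hfg : BaseLT f g) :
    IsHighest (M ∪ {g}) g := by
  refine ⟨Finset.mem_union_right M (Finset.mem_singleton_self g), fun x hx => ?_⟩
  rcases Finset.mem_union.1 hx with hxM | hxg
  · exact (hf.2 x hxM).trans hfg.le
  · rw [Finset.mem_singleton.1 hxg]

lemma IsLowest.exists_transEquiv (hf : IsLowest M f) (hfg : f.1 = g.1) :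
    ∃ N, TransEquiv M N ∧ IsLowest N g := by
  have hg : translateFace (g.2 - f.2) f = g := Prod.ext hfg (add_sub_cancel f.2 g.2)
  refine ⟨M.image (translateFace (g.2 - f.2)), ⟨_, rfl⟩,
    Finset.mem_image.2 ⟨f, hf.1, hg⟩, fun x hx => ?_⟩
  obtain ⟨y, hy, rfl⟩ := Finset.mem_image.1 hx
  calc toLex g.2 = toLex f.2 + toLex (g.2 - f.2) := (add_sub_cancel f.2 g.2).symm
    _ ≤ toLex y.2 + toLex (g.2 - f.2) := by gcongr; exact hf.2 y hy

lemma IsXD.exists_extension {T : Finset (Fin d)} (hk : 1 ≤ k) (hT : T.card = k)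
    (hA : IsXD d k n A) (hf : IsHighest A f) (c : ℕ) :
    ∃ M g, IsXD d k (n + c) M ∧ IsInitialSegment BaseLT A M ∧ IsHighest M g ∧
      (g.1 \ T).card ≤ (f.1 \ T).card - c := by
  induction c with
  | zero => exact ⟨A, f, hA, .refl _ A, hf, le_rfl⟩
  | succ c ih =>
    obtain ⟨M, g, hM, hAM, hg, hgT⟩ := ih
    have hgk : g.1.card = k := hM.2.1 g hg.1
    obtain ⟨g', hgg', hlt, hcard, hg'T⟩ :=
      exists_higher_faceAdj (Finset.card_pos.1 (hgk ▸ hk)) (hgk.trans hT.symm)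
    have hMg' := hg.forall_baseLT (isLowest_singleton g') hlt
    have hg'X : IsXD d k 1 {g'} := hgk ▸ hcard ▸ IsXD.singleton g'
    exact ⟨M ∪ {g'}, g',
      hM.union hg'X (disjoint_of_forall_baseLT hMg') hg.1 (Finset.mem_singleton_self g') hgg',
      hAM.trans (.union_left hMg'), hg.union_singleton hlt, by omega⟩

/-- `M` contains `A` as an initial segment and a translate of `B` as a final segment. -/
def IsJoin (A B M : Finset (Face d)) : Prop :=
  IsInitialSegment BaseLT A M ∧
    ∃ B', TransEquiv B B' ∧ IsInitialSegment (Function.swap BaseLT) B' M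

lemma IsXD.exists_isJoin {c : ℕ} (hk : 1 ≤ k) (hc : min k (d - k) ≤ c + 1)
    (hA : IsXD d k n A) (hB : IsXD d k m B) (hAne : A.Nonempty) (hBne : B.Nonempty) :
    ∃ M, IsXD d k (n + m + c) M ∧ IsJoin A B M := by
  obtain ⟨f, hf⟩ := exists_isHighest hAne
  obtain ⟨b, hb⟩ := exists_isLowest hBne
  have hbk : b.1.card = k := hB.2.1 b hb.1
  have hfb : (f.1 \ b.1).card ≤ c + 1 :=
    calc (f.1 \ b.1).card ≤ min f.1.card (Fintype.card (Fin d) - b.1.card) :=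
          card_sdiff_le_min f.1 b.1
      _ = min k (d - k) := by rw [hA.2.1 f hf.1, hbk, Fintype.card_fin]
      _ ≤ c + 1 := hc
  obtain ⟨M, g, hM, hAM, hg, hgb⟩ := hA.exists_extension hk hbk hf c
  have hgk : g.1.card = k := hM.2.1 g hg.1
  obtain ⟨g', hgg', hlt, hcard, hg'b⟩ :=
    exists_higher_faceAdj (Finset.card_pos.1 (hgk ▸ hk)) (hgk.trans hbk.symm)
  have hparallel : b.1 = g'.1 := by
    have hsub : g'.1 ⊆ b.1 :=
      Finset.sdiff_eq_empty_iff_subset.1 (Finset.card_eq_zero.1 (by omega))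
    exact (Finset.eq_of_subset_of_card_le hsub (by omega)).symm
  obtain ⟨B', hBB', hg'B'⟩ := hb.exists_transEquiv hparallel
  have hMB' := hg.forall_baseLT hg'B' hlt
  refine ⟨M ∪ B', ?_, hAM.trans (.union_left hMB'), B', hBB', .union_right hMB'⟩
  rw [add_right_comm]
  exact hM.union (hB.of_transEquiv hBB') (disjoint_of_forall_baseLT hMB') hg.1 hg'B'.1 hgg'

lemma IsJoin.transEquiv (h : IsJoin A B M) (h' : IsJoin A' B' M') (hA : A.card = A'.card)
    (hB : B.card = B'.card) (hM : TransEquiv M M') : TransEquiv A A' ∧ TransEquiv B B' := by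
  obtain ⟨hAM, C, hBC, hCM⟩ := h
  obtain ⟨hAM', C', hBC', hCM'⟩ := h'
  have hcard : C.card = C'.card := hBC.card_eq ▸ hBC'.card_eq ▸ hB
  have hCC' : TransEquiv C C' :=
    .of_isInitialSegment (r := Function.swap BaseLT) (fun t _ _ => .translateFace t) hM hCM hCM'
      hcard
  exact ⟨.of_isInitialSegment (fun t _ _ => .translateFace t) hM hAM hAM' hA,
    transEquiv_equivalence.trans hBC
      (transEquiv_equivalence.trans hCC' (transEquiv_equivalence.symm hBC'))⟩

end Joining

theorem xdCount_pseudo_superadditive_general {c : ℕ} (hk : 1 ≤ k) (hc : min k (d - k) ≤ c + 1)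
    (hn : 1 ≤ n) (hm : 1 ≤ m) : xdCount d k n * xdCount d k m ≤ xdCount d k (n + m + c) := by
  have hjoin (A : {A : Finset (Face d) // IsXD d k n A})
      (B : {B : Finset (Face d) // IsXD d k m B}) :
      ∃ M : {M : Finset (Face d) // IsXD d k (n + m + c) M}, IsJoin A.1 B.1 M.1 := by
    obtain ⟨M, hM, hABM⟩ := A.2.exists_isJoin hk hc B.2
      (Finset.card_pos.1 (hn.trans_eq A.2.1.symm)) (Finset.card_pos.1 (hm.trans_eq B.2.1.symm))
    exact ⟨⟨M, hM⟩, hABM⟩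
  choose join join_spec using hjoin
  let joinClass (p : XDClass d k n × XDClass d k m) : XDClass d k (n + m + c) :=
    Quot.mk _ (join p.1.out p.2.out)
  have joinClass_injective : Function.Injective joinClass := by
    rintro ⟨a, b⟩ ⟨a', b'⟩ heq
    obtain ⟨ha, hb⟩ := (join_spec _ _).transEquiv (join_spec _ _)
      (a.out.2.1.trans a'.out.2.1.symm) (b.out.2.1.trans b'.out.2.1.symm)
      (XDClass.mk_eq_mk_iff.1 heq)
    rw [← a.out_eq, ← a'.out_eq, ← b.out_eq, ← b'.out_eq, XDClass.mk_eq_mk_iff.2 ha,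
      XDClass.mk_eq_mk_iff.2 hb]
  have hcard := Nat.card_le_card_of_injective joinClass joinClass_injective
  rwa [Nat.card_prod] at hcard

theorem xdCount_pseudo_superadditive (d k : ℕ) (hk : 1 < k) (hkd : k < d)
    (n m : ℕ) (hn : 1 ≤ n) (hm : 1 ≤ m) :
    xdCount d k n * xdCount d k m ≤ xdCount d k (n + m + 2 * (k ^ 2 + 3 * k - 1)) := by
  have hc : min k (d - k) ≤ 2 * (k ^ 2 + 3 * k - 1) + 1 := (min_le_left _ _).trans (by omega)
  exact xdCount_pseudo_superadditive_general hk.le hc hn hm
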